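/- Equivalence of the symmetrized Talagrand inequality and the functional Santaló inequality: Fix d ≥ 1 and let γ be the standard Gaussian measure on ℝ^d. The following two statements are equivalent. (i) For every centered probability measure μ on ℝ^d and every probability measure ν on ℝ^d (with finite second moments), W₂(μ, ν)² ≤ 2 Ent_γ(μ) + 2 Ent_γ(ν). (ii) For all measurable functions f, g on ℝ^d satisfying f(x) + g(y) ≤ −x·y for all x, y, such that e^f is integrable with ∫ x e^{f(x)} dx = 0, one has (∫ e^f dx)(∫ e^g dx) ≤ (2π)^d. -/

import Mathlib

open MeasureTheory ENNReal
open scoped RealInnerProductSpace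

/-- The standard Gaussian measure on `ℝ^d`, with density
`(2π)^{-d/2} exp(-|x|²/2)` with respect to Lebesgue measure. -/
noncomputable def stdGaussian (d : ℕ) : Measure (EuclideanSpace ℝ (Fin d)) :=
  volume.withDensity fun x =>
    ENNReal.ofReal ((2 * Real.pi) ^ (-(d : ℝ) / 2) * Real.exp (-‖x‖ ^ 2 / 2))

/-- `π` is a coupling of `μ` and `ν`: a measure on the product with the given marginals. -/
def IsCoupling {E : Type*} [MeasurableSpace E] (π : Measure (E × E)) (μ ν : Measure E) : Prop :=
  π.map Prod.fst = μ ∧ π.map Prod.snd = ν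

/-- The squared `L²` Kantorovich-Wasserstein distance `W₂(μ,ν)²`: the infimum of
`∫ |x-y|² dπ` over all couplings `π` of `μ` and `ν`. -/
noncomputable def W2sq {E : Type*} [MeasurableSpace E] [NormedAddCommGroup E]
    (μ ν : Measure E) : ℝ≥0∞ :=
  ⨅ (π : Measure (E × E)) (_ : IsCoupling π μ ν), ∫⁻ p, (‖p.1 - p.2‖₊ : ℝ≥0∞) ^ 2 ∂π

open Classical in
/-- The relative entropy (KL divergence) `Ent_γ(μ) = ∫ log(dμ/dγ) dμ` if `μ ≪ γ` (and the
integral makes sense), and `+∞` otherwise. -/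
noncomputable def relEnt {E : Type*} [MeasurableSpace E] (μ γ : Measure E) : ℝ≥0∞ :=
  if μ ≪ γ ∧ Integrable (fun x => Real.log (μ.rnDeriv γ x).toReal) μ
  then ENNReal.ofReal (∫ x, Real.log (μ.rnDeriv γ x).toReal ∂μ)
  else ∞

/-- Finite Kantorovich duality, as an alternative: for probability vectors `p`, `q` and a level `τ`,
either some coupling has cost at most `τ`, or some admissible potentials have value above `τ`. -/
theorem exists_coupling_or_exists_potentials {ι κ : Type*} [Fintype ι] [Fintype κ]
    {p : ι → ℝ} {q : κ → ℝ} (hp : p ∈ stdSimplex ℝ ι) (hq : q ∈ stdSimplex ℝ κ)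
    (c : ι → κ → ℝ) (τ : ℝ) :
    (∃ m : ι → κ → ℝ, (∀ i j, 0 ≤ m i j) ∧ (∀ i, ∑ j, m i j = p i) ∧
      (∀ j, ∑ i, m i j = q j) ∧ ∑ i, ∑ j, m i j * c i j ≤ τ) ∨
    (∃ (a : ι → ℝ) (b : κ → ℝ), (∀ i j, a i + b j ≤ c i j) ∧
      τ < ∑ i, p i * a i + ∑ j, q j * b j) := by
  classical
  let L : (ι × κ → ℝ) →ₗ[ℝ] (ι → ℝ) × (κ → ℝ) × ℝ :=
    { toFun := fun m => (fun i => ∑ j, m (i, j), fun j => ∑ i, m (i, j),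
        ∑ i, ∑ j, m (i, j) * c i j)
      map_add' := fun m n => by
        ext <;> simp [Finset.sum_add_distrib, add_mul]
      map_smul' := fun r m => by
        ext <;> simp [Finset.mul_sum, mul_assoc] }
  have hLval : ∀ m, L m = (fun i => ∑ j, m (i, j), fun j => ∑ i, m (i, j),
        ∑ i, ∑ j, m (i, j) * c i j) := fun _ => rfl
  set K := L '' stdSimplex ℝ (ι × κ)
  set F : Set ((ι → ℝ) × (κ → ℝ) × ℝ) := {p} ×ˢ ({q} ×ˢ Set.Iic τ)
  by_cases hdisj : Disjoint K F
  · right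
    obtain ⟨φ, u, v, hK, huv, hF⟩ := geometric_hahn_banach_compact_closed
      ((convex_stdSimplex ℝ (ι × κ)).linear_image L)
      ((isCompact_stdSimplex ℝ (ι × κ)).image L.continuous_of_finiteDimensional)
      ((convex_singleton p).prod ((convex_singleton q).prod (convex_Iic τ)))
      (isClosed_singleton.prod (isClosed_singleton.prod isClosed_Iic)) hdisj
    set A : ι → ℝ := fun i => φ (fun j => if i = j then 1 else 0, 0, 0)
    set B : κ → ℝ := fun i => φ (0, fun j => if i = j then 1 else 0, 0)
    set T : ℝ := φ (0, 0, 1)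
    have hφ : ∀ x y t, φ (x, y, t) = ∑ i, x i * A i + ∑ j, y j * B j + t * T := by
      intro x y t
      have h1 : φ (x, y, t) = φ (x, 0, 0) + φ (0, y, 0) + φ (0, 0, t) := by
        rw [← map_add, ← map_add]; simp
      have h2 : φ (x, 0, 0) = ∑ i, x i * A i := by
        exact LinearMap.pi_apply_eq_sum_univ
          (φ.toLinearMap ∘ₗ LinearMap.inl ℝ (ι → ℝ) ((κ → ℝ) × ℝ)) x
      have h3 : φ (0, y, 0) = ∑ j, y j * B j := by
        exact LinearMap.pi_apply_eq_sum_univ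
          (φ.toLinearMap ∘ₗ LinearMap.inr ℝ (ι → ℝ) ((κ → ℝ) × ℝ) ∘ₗ
            LinearMap.inl ℝ (κ → ℝ) ℝ) y
      have h4 : φ (0, 0, t) = t * T := by
        have : ((0, 0, t) : (ι → ℝ) × (κ → ℝ) × ℝ) = t • (0, 0, 1) := by simp
        rw [this, map_smul, smul_eq_mul]
      rw [h1, h2, h3, h4]
    set S := ∑ i, p i * A i + ∑ j, q j * B j
    have hF' : ∀ t ≤ τ, v < S + t * T := by
      intro t ht
      have := hF (p, q, t) ⟨rfl, rfl, ht⟩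
      rwa [hφ] at this
    have hprod : S + (∑ i, ∑ j, p i * q j * c i j) * T < u := by
      have h := hK (L fun x => p x.1 * q x.2) ⟨_, ⟨fun x => mul_nonneg (hp.1 _) (hq.1 _), by
        rw [Fintype.sum_prod_type]; simp [← Finset.mul_sum, hq.2, hp.2]⟩, rfl⟩
      rw [hLval, hφ] at h
      simpa [← Finset.mul_sum, ← Finset.sum_mul, hq.2, hp.2] using h
    have hT : T < 0 := by
      by_contra! hT
      set C := ∑ i, ∑ j, p i * q j * c i j
      have h1 := hF' (min τ C) (min_le_left _ _)
      have h2 := mul_le_mul_of_nonneg_right (min_le_right τ C) hT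
      linarith
    have hpoint : ∀ i j, A i + B j + c i j * T < u := by
      intro i j
      have h := hK (L (Pi.single (i, j) 1)) ⟨_, single_mem_stdSimplex ℝ _, rfl⟩
      rw [hLval, hφ] at h
      have e : ∀ i' j', (Pi.single (i, j) 1 : ι × κ → ℝ) (i', j')
          = (if i' = i then 1 else 0) * (if j' = j then 1 else 0) := by
        intro i' j'
        by_cases h1 : i' = i <;> by_cases h2 : j' = j <;> simp [h1, h2]
      simpa [e, ← Finset.mul_sum, ← Finset.sum_mul, mul_assoc] using h
    refine ⟨fun i => (A i - u) / (-T), fun j => B j / (-T), fun i j => ?_, ?_⟩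
    · rw [← add_div, div_le_iff₀ (by linarith)]
      linarith [hpoint i j]
    · have e : ∑ i, p i * ((A i - u) / (-T)) + ∑ j, q j * (B j / (-T)) = (S - u) / (-T) := by
        have h1 : ∑ i, p i * ((A i - u) / (-T)) = (∑ i, p i * A i - u) / (-T) := by
          calc _ = (∑ i, p i * A i - (∑ i, p i) * u) / (-T) := by
                rw [Finset.sum_mul, ← Finset.sum_sub_distrib, Finset.sum_div]
                exact Finset.sum_congr rfl fun i _ => by ring
            _ = _ := by rw [hp.2, one_mul]
        have h2 : ∑ j, q j * (B j / (-T)) = (∑ j, q j * B j) / (-T) := by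
          rw [Finset.sum_div]; exact Finset.sum_congr rfl fun i _ => by ring
        rw [h1, h2, ← add_div]; congr 1; ring
      rw [e, lt_div_iff₀ (by linarith)]
      linarith [hF' τ le_rfl]
  · left
    obtain ⟨x, ⟨m, hm, rfl⟩, h1, h2, h3⟩ := Set.not_disjoint_iff.1 hdisj
    rw [hLval] at h1 h2 h3
    exact ⟨fun i j => m (i, j), fun i j => hm.1 _, fun i => congrFun h1 i,
      fun j => congrFun h2 j, h3⟩

/-- The easy half of the Donsker-Varadhan variational formula. -/
theorem integral_le_integral_llr_add_log {α : Type*} [MeasurableSpace α] {μ ν : Measure α}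
    [IsProbabilityMeasure μ] [SigmaFinite ν] {F : α → ℝ} (hμν : μ ≪ ν)
    (hllr : Integrable (llr μ ν) μ) (hF : Integrable F μ)
    (hexp : Integrable (fun x => Real.exp (F x)) ν) :
    ∫ x, F x ∂μ ≤ ∫ x, llr μ ν x ∂μ + Real.log (∫ x, Real.exp (F x) ∂ν) := by
  have : NeZero ν := ⟨by
    rintro rfl
    exact IsProbabilityMeasure.ne_zero μ (Measure.absolutelyContinuous_zero_iff.1 hμν)⟩
  have := isProbabilityMeasure_tilted hexp
  have h := InformationTheory.integral_llr_add_sub_measure_univ_nonneg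
    (hμν.trans (absolutelyContinuous_tilted hexp))
    (integrable_llr_tilted_right hμν hF hllr hexp)
  rw [integral_llr_tilted_right hμν hF hexp hllr] at h
  simp only [probReal_univ] at h
  linarith

theorem integrable_exp_neg_sq_norm_div_two (d : ℕ) :
    Integrable (fun x : EuclideanSpace ℝ (Fin d) => Real.exp (-‖x‖ ^ 2 / 2)) := by
  have h := (GaussianFourier.integrable_cexp_neg_mul_sq_norm_add (V := EuclideanSpace ℝ (Fin d))
    (b := 1 / 2) (by norm_num) 0 0).norm
  refine h.congr (Filter.Eventually.of_forall fun x => ?_)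
  simp only [Complex.norm_exp]
  congr 1
  simp [← Complex.ofReal_pow]
  ring

theorem integral_exp_neg_sq_norm_div_two (d : ℕ) :
    ∫ x : EuclideanSpace ℝ (Fin d), Real.exp (-‖x‖ ^ 2 / 2) = (2 * Real.pi) ^ ((d : ℝ) / 2) := by
  have h := GaussianFourier.integral_rexp_neg_mul_sq_norm (V := EuclideanSpace ℝ (Fin d))
    (b := 1 / 2) (by norm_num)
  simp only [finrank_euclideanSpace, Fintype.card_fin] at h
  rw [show 2 * Real.pi = Real.pi / (1 / 2) by ring, ← h]
  congr 1 with x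
  congr 1
  ring

theorem stdGaussian_eq_tilted (d : ℕ) :
    stdGaussian d = (volume : Measure (EuclideanSpace ℝ (Fin d))).tilted
      fun x => -‖x‖ ^ 2 / 2 := by
  rw [stdGaussian, Measure.tilted, integral_exp_neg_sq_norm_div_two]
  congr 1 with x
  rw [neg_div, Real.rpow_neg (by positivity)]
  congr 1
  rw [inv_mul_eq_div]

instance isProbabilityMeasure_stdGaussian (d : ℕ) : IsProbabilityMeasure (stdGaussian d) := by
  rw [stdGaussian_eq_tilted]
  exact isProbabilityMeasure_tilted (integrable_exp_neg_sq_norm_div_two d)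

theorem stdGaussian_tilted_add_sq_norm {d : ℕ} (f : EuclideanSpace ℝ (Fin d) → ℝ) :
    (stdGaussian d).tilted (fun x => f x + ‖x‖ ^ 2 / 2) = volume.tilted f := by
  rw [stdGaussian_eq_tilted, tilted_tilted (integrable_exp_neg_sq_norm_div_two d)]
  congr 1 with x
  simp only [Pi.add_apply]
  ring

theorem integral_exp_add_sq_norm_stdGaussian {d : ℕ} (f : EuclideanSpace ℝ (Fin d) → ℝ) :
    ∫ x, Real.exp (f x + ‖x‖ ^ 2 / 2) ∂(stdGaussian d) =
      (∫ x, Real.exp (f x)) / (2 * Real.pi) ^ ((d : ℝ) / 2) := by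
  rw [stdGaussian_eq_tilted, integral_exp_tilted, integral_exp_neg_sq_norm_div_two]
  congr 2 with x
  simp only [Pi.add_apply]
  congr 1
  ring

theorem integrable_exp_add_sq_norm_stdGaussian {d : ℕ} {f : EuclideanSpace ℝ (Fin d) → ℝ}
    (hf : Integrable fun x => Real.exp (f x)) :
    Integrable (fun x => Real.exp (f x + ‖x‖ ^ 2 / 2)) (stdGaussian d) := by
  rw [stdGaussian_eq_tilted, integrable_tilted_iff (integrable_exp_neg_sq_norm_div_two d)]
  refine hf.congr (Filter.Eventually.of_forall fun x => ?_)
  simp only [smul_eq_mul, ← Real.exp_add]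
  congr 1
  ring

section Decay

variable {d : ℕ} {f : EuclideanSpace ℝ (Fin d) → ℝ}

/-- A function which admits a real-valued polar partner decays faster than any linear function. -/
theorem exists_le_sub_mul_norm_of_add_le_neg_inner (hd : 1 ≤ d)
    {g : EuclideanSpace ℝ (Fin d) → ℝ} (hfg : ∀ x y, f x + g y ≤ -⟪x, y⟫) (t : ℝ) :
    ∃ C : ℝ, ∀ x, f x ≤ C - t * ‖x‖ := by
  have hd' : (0 : ℝ) < d := by exact_mod_cast hd
  set T : ℝ := |t| * d
  have hT : 0 ≤ T := by positivity
  let G : Fin d → ℝ := fun i =>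
    |g (EuclideanSpace.single i T)| + |g (EuclideanSpace.single i (-T))|
  refine ⟨∑ i, G i, fun x => ?_⟩
  have hnorm : ‖x‖ ≤ ∑ i, |x i| := by
    rw [EuclideanSpace.norm_eq, Real.sqrt_le_left (by positivity)]
    simpa using Finset.sum_sq_le_sq_sum_of_nonneg (s := Finset.univ) (f := fun i => |x i|)
      fun i _ => abs_nonneg _
  obtain ⟨i, -, hi⟩ : ∃ i ∈ Finset.univ, ‖x‖ / d ≤ |x i| := by
    refine Finset.exists_le_of_sum_le ⟨⟨0, hd⟩, Finset.mem_univ _⟩ ?_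
    simpa [mul_div_cancel₀ _ hd'.ne'] using hnorm
  rw [div_le_iff₀ hd'] at hi
  have hG : G i ≤ ∑ i, G i :=
    Finset.single_le_sum (fun i _ => by positivity) (Finset.mem_univ i)
  have h1 := hfg x (EuclideanSpace.single i T)
  have h2 := hfg x (EuclideanSpace.single i (-T))
  simp only [EuclideanSpace.inner_single_right, conj_trivial] at h1 h2
  have h3 : t * ‖x‖ ≤ T * |x i| := by
    calc t * ‖x‖ ≤ |t| * (|x i| * d) := by gcongr; exact le_abs_self t
      _ = T * |x i| := by ring
  have h4 : f x ≤ G i - T * |x i| := by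
    have := neg_abs_le (g (EuclideanSpace.single i T))
    have := neg_abs_le (g (EuclideanSpace.single i (-T)))
    have := abs_nonneg (g (EuclideanSpace.single i T))
    have := abs_nonneg (g (EuclideanSpace.single i (-T)))
    rcases abs_cases (x i) with ⟨h, -⟩ | ⟨h, -⟩ <;> simp only [h, G] <;> linarith
  linarith

theorem integrable_exp_neg_finrank_add_one_mul_norm (d : ℕ) :
    Integrable fun x : EuclideanSpace ℝ (Fin d) => Real.exp (-((d + 1 : ℝ) * ‖x‖)) := by
  refine (integrable_one_add_norm (E := EuclideanSpace ℝ (Fin d)) (r := d + 1)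
    (by simp)).mono' (by fun_prop) (Filter.Eventually.of_forall fun x => ?_)
  rw [Real.norm_of_nonneg (Real.exp_pos _).le, Real.rpow_def_of_pos (by positivity)]
  refine Real.exp_le_exp.2 ?_
  have h := Real.log_le_sub_one_of_pos (show 0 < 1 + ‖x‖ by positivity)
  have : (0 : ℝ) ≤ d + 1 := by positivity
  nlinarith

theorem integrable_of_norm_le_exp {F : Type*} [NormedAddCommGroup F]
    (hf : ∀ t : ℝ, ∃ C : ℝ, ∀ x, f x ≤ C - t * ‖x‖)
    {h : EuclideanSpace ℝ (Fin d) → F} (hh : AEStronglyMeasurable h) (s K : ℝ)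
    (hle : ∀ x, ‖h x‖ ≤ K * Real.exp (f x + s * ‖x‖)) : Integrable h := by
  obtain ⟨C, hC⟩ := hf (d + 1 + s)
  refine ((integrable_exp_neg_finrank_add_one_mul_norm d).const_mul (|K| * Real.exp C)).mono' hh
    (Filter.Eventually.of_forall fun x => (hle x).trans ?_)
  rw [mul_assoc, ← Real.exp_add]
  exact mul_le_mul (le_abs_self K) (Real.exp_le_exp.2 (by linarith [hC x]))
    (Real.exp_pos _).le (abs_nonneg K)

theorem integrable_exp_of_decay (hfm : Measurable f)
    (hf : ∀ t : ℝ, ∃ C : ℝ, ∀ x, f x ≤ C - t * ‖x‖) :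
    Integrable fun x => Real.exp (f x) :=
  integrable_of_norm_le_exp hf (by fun_prop) 0 1 fun x => by simp

theorem integrable_exp_smul_of_decay (hfm : Measurable f)
    (hf : ∀ t : ℝ, ∃ C : ℝ, ∀ x, f x ≤ C - t * ‖x‖) :
    Integrable fun x => Real.exp (f x) • x :=
  integrable_of_norm_le_exp hf (by fun_prop) 1 1 fun x => by
    rw [norm_smul, Real.norm_of_nonneg (Real.exp_pos _).le, one_mul, one_mul, Real.exp_add]
    gcongr
    linarith [Real.add_one_le_exp ‖x‖]

theorem integrable_exp_mul_sq_norm_of_decay (hfm : Measurable f)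
    (hf : ∀ t : ℝ, ∃ C : ℝ, ∀ x, f x ≤ C - t * ‖x‖) :
    Integrable fun x => Real.exp (f x) * ‖x‖ ^ 2 :=
  integrable_of_norm_le_exp hf (by fun_prop) 1 2 fun x => by
    rw [Real.norm_of_nonneg (by positivity), one_mul, Real.exp_add, mul_left_comm]
    gcongr
    linarith [Real.quadratic_le_exp_of_nonneg (norm_nonneg x), norm_nonneg x]

theorem integrable_exp_mul_self_of_decay (hfm : Measurable f)
    (hf : ∀ t : ℝ, ∃ C : ℝ, ∀ x, f x ≤ C - t * ‖x‖) :
    Integrable fun x => Real.exp (f x) * f x := by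
  have hscale : ∀ r : ℝ, 0 < r → ∀ t : ℝ, ∃ C : ℝ, ∀ x, r * f x ≤ C - t * ‖x‖ := by
    intro r hr t
    obtain ⟨C, hC⟩ := hf (t / r)
    refine ⟨r * C, fun x => (mul_le_mul_of_nonneg_left (hC x) hr.le).trans_eq ?_⟩
    field_simp
  have h1 := integrable_exp_of_decay (by fun_prop) (hscale (1 / 2) (by norm_num))
  have h2 := integrable_exp_of_decay (by fun_prop) (hscale 2 (by norm_num))
  refine ((h1.const_mul 2).add h2).mono' (by fun_prop) (Filter.Eventually.of_forall fun x => ?_)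
  rw [norm_mul, Real.norm_of_nonneg (Real.exp_pos _).le, Real.norm_eq_abs, Pi.add_apply]
  rcases abs_cases (f x) with ⟨h, -⟩ | ⟨h, -⟩ <;> rw [h]
  · have e : Real.exp (2 * f x) = Real.exp (f x) * Real.exp (f x) := by
      rw [← Real.exp_add]; ring_nf
    have := mul_le_mul_of_nonneg_left (show f x ≤ Real.exp (f x) by
      linarith [Real.add_one_le_exp (f x)]) (Real.exp_pos (f x)).le
    rw [e]
    linarith [Real.exp_pos (1 / 2 * f x)]
  · have e : Real.exp (1 / 2 * f x) = Real.exp (f x) * Real.exp (-(1 / 2 * f x)) := by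
      rw [← Real.exp_add]; ring_nf
    have := mul_le_mul_of_nonneg_left (show -f x ≤ 2 * Real.exp (-(1 / 2 * f x)) by
      linarith [Real.add_one_le_exp (-(1 / 2 * f x))]) (Real.exp_pos (f x)).le
    rw [e]
    linarith [Real.exp_pos (2 * f x)]

theorem decay_add_inner (hf : ∀ t : ℝ, ∃ C : ℝ, ∀ x, f x ≤ C - t * ‖x‖)
    (a : EuclideanSpace ℝ (Fin d)) (t : ℝ) : ∃ C : ℝ, ∀ x, f x + ⟪a, x⟫ ≤ C - t * ‖x‖ := by
  obtain ⟨C, hC⟩ := hf (t + ‖a‖)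
  exact ⟨C, fun x => by linarith [hC x, real_inner_le_norm a x]⟩

theorem continuous_integral_exp_add_inner (hfm : Measurable f)
    (hf : ∀ t : ℝ, ∃ C : ℝ, ∀ x, f x ≤ C - t * ‖x‖) :
    Continuous fun a : EuclideanSpace ℝ (Fin d) => ∫ x, Real.exp (f x + ⟪a, x⟫) := by
  refine continuous_iff_continuousAt.2 fun a => ?_
  refine continuousAt_of_dominated (bound := fun x => Real.exp (f x + (‖a‖ + 1) * ‖x‖))
    (Filter.Eventually.of_forall fun b => by fun_prop) ?_
    (integrable_of_norm_le_exp hf (by fun_prop) (‖a‖ + 1) 1 fun x => by simp)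
    (Filter.Eventually.of_forall fun x => by fun_prop)
  filter_upwards [Metric.ball_mem_nhds a one_pos] with b hb
  refine Filter.Eventually.of_forall fun x => ?_
  rw [Real.norm_of_nonneg (Real.exp_pos _).le]
  gcongr
  refine (real_inner_le_norm b x).trans ?_
  gcongr
  have := norm_le_norm_add_norm_sub a b
  rw [mem_ball_iff_norm'] at hb
  linarith

theorem tendsto_integral_exp_add_inner_cocompact (hfm : Measurable f)
    (hf : ∀ t : ℝ, ∃ C : ℝ, ∀ x, f x ≤ C - t * ‖x‖)
    {K : ℝ} (hK : ∀ x, ‖x‖ ≤ 2 → K ≤ f x) :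
    Filter.Tendsto (fun a : EuclideanSpace ℝ (Fin d) => ∫ x, Real.exp (f x + ⟪a, x⟫))
      (Filter.cocompact _) Filter.atTop := by
  set V : ℝ := volume.real (Metric.ball (0 : EuclideanSpace ℝ (Fin d)) (1 / 2))
  have hV : 0 < V :=
    ENNReal.toReal_pos (Metric.measure_ball_pos _ _ (by norm_num)).ne' measure_ball_lt_top.ne
  have hlower : ∀ a : EuclideanSpace ℝ (Fin d),
      Real.exp K * V / 2 * ‖a‖ ≤ ∫ x, Real.exp (f x + ⟪a, x⟫) := by
    intro a
    set c : EuclideanSpace ℝ (Fin d) := ‖a‖⁻¹ • a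
    have hac : ⟪a, c⟫ = ‖a‖ := by
      rcases eq_or_ne a 0 with h | h
      · simp [h]
      · have : ‖a‖ ≠ 0 := norm_ne_zero_iff.2 h
        simp only [c, real_inner_smul_right, real_inner_self_eq_norm_sq]
        field_simp
    have hc : ‖c‖ ≤ 1 := by
      simp only [c, norm_smul, norm_inv, norm_norm]
      exact inv_mul_le_one
    have hint := integrable_exp_of_decay (f := fun x => f x + ⟪a, x⟫) (by fun_prop)
      (decay_add_inner hf a)
    calc Real.exp K * V / 2 * ‖a‖
        = ∫ x in Metric.ball c (1 / 2), Real.exp K * (‖a‖ / 2) := by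
          rw [setIntegral_const, measureReal_def, Measure.addHaar_ball_center,
            ← measureReal_def, smul_eq_mul]
          ring
      _ ≤ ∫ x in Metric.ball c (1 / 2), Real.exp (f x + ⟪a, x⟫) := by
          refine setIntegral_mono_on (integrableOn_const (measure_ball_lt_top.ne))
            hint.integrableOn measurableSet_ball fun x hx => ?_
          rw [mem_ball_iff_norm] at hx
          have h1 : ‖x‖ ≤ 2 := by
            have := norm_add_le (x - c) c
            rw [sub_add_cancel] at this
            linarith
          have h2 : ‖a‖ / 2 ≤ ⟪a, x⟫ := by
            have e : ⟪a, x⟫ = ‖a‖ + ⟪a, x - c⟫ := by rw [inner_sub_right, hac]; ring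
            have := neg_le_of_abs_le (abs_real_inner_le_norm a (x - c))
            have := mul_le_mul_of_nonneg_left hx.le (norm_nonneg a)
            linarith
          rw [Real.exp_add]
          gcongr
          · exact hK x h1
          · linarith [Real.add_one_le_exp ⟪a, x⟫]
      _ ≤ ∫ x, Real.exp (f x + ⟪a, x⟫) :=
          setIntegral_le_integral hint (Filter.Eventually.of_forall fun x => (Real.exp_pos _).le)
  refine Filter.tendsto_atTop_mono hlower ?_
  exact (tendsto_norm_cocompact_atTop).const_mul_atTop (by positivity)

/-- A rapidly decaying log-density can be recentered by adding a linear function. -/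
theorem exists_integral_exp_add_inner_smul_eq_zero (hfm : Measurable f)
    (hf : ∀ t : ℝ, ∃ C : ℝ, ∀ x, f x ≤ C - t * ‖x‖)
    {K : ℝ} (hK : ∀ x, ‖x‖ ≤ 2 → K ≤ f x) :
    ∃ a : EuclideanSpace ℝ (Fin d), ∫ x, Real.exp (f x + ⟪a, x⟫) • x = 0 := by
  obtain ⟨a, ha⟩ := (continuous_integral_exp_add_inner hfm hf).exists_forall_le
    (tendsto_integral_exp_add_inner_cocompact hfm hf hK)
  refine ⟨a, ?_⟩
  have hint := integrable_exp_smul_of_decay (f := fun x => f x + ⟪a, x⟫) (by fun_prop)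
    (decay_add_inner hf a)
  have key : ∀ v : EuclideanSpace ℝ (Fin d), ∫ x, ⟪v, Real.exp (f x + ⟪a, x⟫) • x⟫ = 0 := by
    intro v
    have hderiv := (hasDerivAt_integral_of_dominated_loc_of_deriv_le (μ := volume) (x₀ := (0 : ℝ))
      (F := fun (s : ℝ) x => Real.exp (f x + ⟪a + s • v, x⟫))
      (F' := fun (s : ℝ) x => Real.exp (f x + ⟪a + s • v, x⟫) * ⟪v, x⟫)
      (bound := fun x => Real.exp (f x + (‖a‖ + ‖v‖ + ‖v‖) * ‖x‖))
      (Metric.ball_mem_nhds 0 one_pos) (Filter.Eventually.of_forall fun s => by fun_prop)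
      (integrable_exp_of_decay (by fun_prop) (decay_add_inner hf _)) (by fun_prop)
      (Filter.Eventually.of_forall fun x s hs => ?_)
      (integrable_of_norm_le_exp hf (by fun_prop) (‖a‖ + ‖v‖ + ‖v‖) 1 fun x => by simp)
      (Filter.Eventually.of_forall fun x s hs => ?_)).2
    · have hmin : IsLocalMin (fun s : ℝ => ∫ x, Real.exp (f x + ⟪a + s • v, x⟫)) 0 :=
        Filter.Eventually.of_forall fun s => by simpa using ha (a + s • v)
      have h0 := hmin.hasDerivAt_eq_zero hderiv
      simpa [real_inner_smul_right] using h0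
    · rw [norm_mul, Real.norm_of_nonneg (Real.exp_pos _).le, Real.norm_eq_abs, add_mul,
        ← add_assoc, Real.exp_add _ (‖v‖ * ‖x‖)]
      have hs' : |s| ≤ 1 := by
        rw [mem_ball_zero_iff] at hs
        exact hs.le
      gcongr
      · refine (real_inner_le_norm _ _).trans ?_
        gcongr
        refine (norm_add_le _ _).trans ?_
        rw [norm_smul, Real.norm_eq_abs]
        gcongr
        exact mul_le_of_le_one_left (norm_nonneg v) hs'
      · linarith [abs_real_inner_le_norm v x, Real.add_one_le_exp (‖v‖ * ‖x‖)]
    · have h : HasDerivAt (fun s : ℝ => f x + ⟪a + s • v, x⟫) ⟪v, x⟫ s := by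
        simp only [inner_add_left, real_inner_smul_left, ← add_assoc]
        simpa using ((hasDerivAt_id s).mul_const ⟪v, x⟫).const_add (f x + ⟪a, x⟫)
      exact h.exp
  have h := key (∫ x, Real.exp (f x + ⟪a, x⟫) • x)
  rw [integral_inner hint] at h
  exact inner_self_eq_zero.1 h

end Decay

section Entropy

theorem two_mul_ofReal_add_two_mul_ofReal {a b : ℝ} (ha : 0 ≤ a) (hb : 0 ≤ b) :
    2 * ENNReal.ofReal a + 2 * ENNReal.ofReal b = ENNReal.ofReal (2 * a + 2 * b) := by
  rw [ENNReal.ofReal_add (by positivity) (by positivity), ENNReal.ofReal_mul zero_le_two,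
    ENNReal.ofReal_mul zero_le_two, ENNReal.ofReal_ofNat]

variable {d : ℕ}

/-- Gibbs' variational inequality for the Gaussian relative entropy, in terms of a log-density
with respect to Lebesgue measure. -/
theorem integral_add_half_integral_sq_norm_le {μ : Measure (EuclideanSpace ℝ (Fin d))}
    [IsProbabilityMeasure μ] (hac : μ ≪ stdGaussian d)
    (hllr : Integrable (llr μ (stdGaussian d)) μ) (hμ : Integrable (fun x => ‖x‖ ^ 2) μ)
    {f : EuclideanSpace ℝ (Fin d) → ℝ} (hfμ : Integrable f μ)
    (hf : Integrable fun x => Real.exp (f x)) :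
    ∫ x, f x ∂μ + (∫ x, ‖x‖ ^ 2 ∂μ) / 2 ≤ ∫ x, llr μ (stdGaussian d) x ∂μ +
      Real.log (∫ x, Real.exp (f x)) - (d : ℝ) / 2 * Real.log (2 * Real.pi) := by
  have h := integral_le_integral_llr_add_log hac hllr (hfμ.add (hμ.div_const 2))
    (integrable_exp_add_sq_norm_stdGaussian hf)
  simp only [Pi.add_apply] at h
  rw [integral_add hfμ (hμ.div_const 2), integral_div, integral_exp_add_sq_norm_stdGaussian,
    Real.log_div (integral_exp_pos hf).ne' (by positivity), Real.log_rpow (by positivity)] at h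
  linarith

/-- The Gaussian relative entropy of the probability measure with log-density `f`. -/
theorem relEnt_tilted {f : EuclideanSpace ℝ (Fin d) → ℝ}
    (hf : Integrable fun x => Real.exp (f x)) (hff : Integrable f (volume.tilted f))
    (hsq : Integrable (fun x => ‖x‖ ^ 2) (volume.tilted f)) :
    0 ≤ ∫ x, f x ∂(volume.tilted f) + (∫ x, ‖x‖ ^ 2 ∂(volume.tilted f)) / 2
        - Real.log (∫ x, Real.exp (f x)) + (d : ℝ) / 2 * Real.log (2 * Real.pi) ∧
    relEnt (volume.tilted f) (stdGaussian d) = ENNReal.ofReal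
      (∫ x, f x ∂(volume.tilted f) + (∫ x, ‖x‖ ^ 2 ∂(volume.tilted f)) / 2
        - Real.log (∫ x, Real.exp (f x)) + (d : ℝ) / 2 * Real.log (2 * Real.pi)) := by
  have hprob : IsProbabilityMeasure (volume.tilted f) := isProbabilityMeasure_tilted hf
  have hac : volume.tilted f ≪ stdGaussian d := by
    rw [← stdGaussian_tilted_add_sq_norm f]
    exact tilted_absolutelyContinuous _ _
  have hlog : (fun x => Real.log ((volume.tilted f).rnDeriv (stdGaussian d) x).toReal)
      =ᵐ[volume.tilted f] fun x => f x + ‖x‖ ^ 2 / 2 -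
        (Real.log (∫ x, Real.exp (f x)) - (d : ℝ) / 2 * Real.log (2 * Real.pi)) := by
    have h := log_rnDeriv_tilted_left_self (integrable_exp_add_sq_norm_stdGaussian hf)
    rw [stdGaussian_tilted_add_sq_norm, integral_exp_add_sq_norm_stdGaussian,
      Real.log_div (integral_exp_pos hf).ne' (by positivity),
      Real.log_rpow (by positivity)] at h
    exact hac.ae_eq h
  have hsum : Integrable (fun x => f x + ‖x‖ ^ 2 / 2) (volume.tilted f) :=
    hff.add (hsq.div_const 2)
  have hint : Integrable (fun x =>
      Real.log ((volume.tilted f).rnDeriv (stdGaussian d) x).toReal) (volume.tilted f) :=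
    (hsum.sub (integrable_const _)).congr hlog.symm
  have hval : ∫ x, Real.log ((volume.tilted f).rnDeriv (stdGaussian d) x).toReal
      ∂(volume.tilted f) = ∫ x, f x ∂(volume.tilted f) + (∫ x, ‖x‖ ^ 2 ∂(volume.tilted f)) / 2
        - Real.log (∫ x, Real.exp (f x)) + (d : ℝ) / 2 * Real.log (2 * Real.pi) := by
    rw [integral_congr_ae hlog, integral_sub hsum (integrable_const _),
      integral_add hff (hsq.div_const 2), integral_div, integral_const, probReal_univ]
    simp only [smul_eq_mul]
    ring
  have hnonneg := InformationTheory.integral_llr_add_sub_measure_univ_nonneg hac hint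
  rw [llr_def, hval, probReal_univ, probReal_univ] at hnonneg
  exact ⟨by linarith, by rw [relEnt, if_pos ⟨hac, hint⟩, hval]⟩

/-- Weak Kantorovich duality for the quadratic cost. -/
theorem ofReal_le_W2sq {μ ν : Measure (EuclideanSpace ℝ (Fin d))}
    [IsProbabilityMeasure μ] [IsProbabilityMeasure ν]
    {f g : EuclideanSpace ℝ (Fin d) → ℝ} (hfg : ∀ x y, f x + g y ≤ -⟪x, y⟫)
    (hf : Integrable f μ) (hg : Integrable g ν)
    (hμ : Integrable (fun x => ‖x‖ ^ 2) μ) (hν : Integrable (fun x => ‖x‖ ^ 2) ν) :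
    ENNReal.ofReal (2 * ∫ x, f x ∂μ + 2 * ∫ y, g y ∂ν + ∫ x, ‖x‖ ^ 2 ∂μ + ∫ y, ‖y‖ ^ 2 ∂ν)
      ≤ W2sq μ ν := by
  refine le_iInf₂ fun π hπ => ?_
  obtain ⟨rfl, rfl⟩ := hπ
  have hF := (hf.const_mul 2).add hμ
  have hG := (hg.const_mul 2).add hν
  have hF' : Integrable (fun z : EuclideanSpace ℝ (Fin d) × EuclideanSpace ℝ (Fin d) =>
      2 * f z.1 + ‖z.1‖ ^ 2) π := hF.comp_measurable measurable_fst
  have hG' : Integrable (fun z : EuclideanSpace ℝ (Fin d) × EuclideanSpace ℝ (Fin d) =>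
      2 * g z.2 + ‖z.2‖ ^ 2) π := hG.comp_measurable measurable_snd
  have e1 := integral_map measurable_fst.aemeasurable hF.aestronglyMeasurable
  have e2 := integral_map measurable_snd.aemeasurable hG.aestronglyMeasurable
  simp only [Pi.add_apply] at e1 e2
  rw [integral_add (hf.const_mul 2) hμ, integral_const_mul] at e1
  rw [integral_add (hg.const_mul 2) hν, integral_const_mul] at e2
  have hsum := hF'.fun_add hG'
  calc _ = ENNReal.ofReal (∫ z, (2 * f z.1 + ‖z.1‖ ^ 2) + (2 * g z.2 + ‖z.2‖ ^ 2) ∂π) := by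
        rw [integral_add hF' hG', ← e1, ← e2]
        congr 1
        ring
    _ ≤ ENNReal.ofReal (∫ z, max ((2 * f z.1 + ‖z.1‖ ^ 2) + (2 * g z.2 + ‖z.2‖ ^ 2)) 0 ∂π) :=
        ENNReal.ofReal_le_ofReal (integral_mono hsum hsum.pos_part fun z => le_max_left _ _)
    _ = ∫⁻ z, ENNReal.ofReal
          (max ((2 * f z.1 + ‖z.1‖ ^ 2) + (2 * g z.2 + ‖z.2‖ ^ 2)) 0) ∂π :=
        ofReal_integral_eq_lintegral_ofReal hsum.pos_part
          (Filter.Eventually.of_forall fun z => le_max_right _ _)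
    _ ≤ _ := by
        refine lintegral_mono fun z => ?_
        rw [← enorm_eq_nnnorm, ← ofReal_norm, ← ENNReal.ofReal_pow (norm_nonneg _)]
        refine ENNReal.ofReal_le_ofReal (max_le ?_ (by positivity))
        rw [norm_sub_sq_real]
        linarith [hfg z.1 z.2]

theorem functional_santalo_of_symmetrized_talagrand (hd : 1 ≤ d)
    (hT : ∀ μ ν : Measure (EuclideanSpace ℝ (Fin d)),
        IsProbabilityMeasure μ → IsProbabilityMeasure ν →
        Integrable (fun x => ‖x‖ ^ 2) μ → Integrable (fun x => ‖x‖ ^ 2) ν →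
        (∫ x, x ∂μ) = 0 →
        W2sq μ ν ≤ 2 * relEnt μ (stdGaussian d) + 2 * relEnt ν (stdGaussian d))
    {f g : EuclideanSpace ℝ (Fin d) → ℝ} (hfm : Measurable f) (hgm : Measurable g)
    (hfg : ∀ x y, f x + g y ≤ -⟪x, y⟫) (hcent : (∫ x, Real.exp (f x) • x) = 0) :
    (∫ x, Real.exp (f x)) * (∫ y, Real.exp (g y)) ≤ (2 * Real.pi) ^ d := by
  have hdf := exists_le_sub_mul_norm_of_add_le_neg_inner hd hfg
  have hdg := exists_le_sub_mul_norm_of_add_le_neg_inner (f := g) (g := f) hd fun x y => by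
    rw [add_comm, real_inner_comm]; exact hfg y x
  have hf := integrable_exp_of_decay hfm hdf
  have hg := integrable_exp_of_decay hgm hdg
  have hμ : IsProbabilityMeasure (volume.tilted f) := isProbabilityMeasure_tilted hf
  have hν : IsProbabilityMeasure (volume.tilted g) := isProbabilityMeasure_tilted hg
  have hfi : Integrable f (volume.tilted f) :=
    (integrable_tilted_iff hf _).2 (integrable_exp_mul_self_of_decay hfm hdf)
  have hgi : Integrable g (volume.tilted g) :=
    (integrable_tilted_iff hg _).2 (integrable_exp_mul_self_of_decay hgm hdg)
  have hfs : Integrable (fun x => ‖x‖ ^ 2) (volume.tilted f) :=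
    (integrable_tilted_iff hf _).2 (integrable_exp_mul_sq_norm_of_decay hfm hdf)
  have hgs : Integrable (fun x => ‖x‖ ^ 2) (volume.tilted g) :=
    (integrable_tilted_iff hg _).2 (integrable_exp_mul_sq_norm_of_decay hgm hdg)
  have hcent' : ∫ x, x ∂(volume.tilted f) = 0 := by
    rw [integral_tilted]
    simp only [div_eq_inv_mul, mul_smul]
    rw [integral_smul, hcent, smul_zero]
  have h := (ofReal_le_W2sq hfg hfi hgi hfs hgs).trans (hT _ _ hμ hν hfs hgs hcent')
  obtain ⟨hf0, hfe⟩ := relEnt_tilted hf hfi hfs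
  obtain ⟨hg0, hge⟩ := relEnt_tilted hg hgi hgs
  rw [hfe, hge, two_mul_ofReal_add_two_mul_ofReal hf0 hg0,
    ENNReal.ofReal_le_ofReal_iff (by linarith)] at h
  have hZf := integral_exp_pos hf
  have hZg := integral_exp_pos hg
  rw [← Real.log_le_log_iff (by positivity) (by positivity), Real.log_mul hZf.ne' hZg.ne',
    Real.log_pow]
  linarith

/-- The functional Santaló inequality bounds the value of the Kantorovich dual problem. -/
theorem integral_add_integral_le_of_functional_santalo (hd : 1 ≤ d)
    (hS : ∀ f g : EuclideanSpace ℝ (Fin d) → ℝ, Measurable f → Measurable g →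
        (∀ x y, f x + g y ≤ -⟪x, y⟫) →
        Integrable (fun x => Real.exp (f x)) →
        (∫ x, Real.exp (f x) • x) = 0 →
        (∫ x, Real.exp (f x)) * (∫ y, Real.exp (g y)) ≤ (2 * Real.pi) ^ d)
    {μ ν : Measure (EuclideanSpace ℝ (Fin d))}
    [IsProbabilityMeasure μ] [IsProbabilityMeasure ν]
    (hμ : Integrable (fun x => ‖x‖ ^ 2) μ) (hν : Integrable (fun x => ‖x‖ ^ 2) ν)
    (hcent : ∫ x, x ∂μ = 0) (hacμ : μ ≪ stdGaussian d) (hacν : ν ≪ stdGaussian d)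
    (hllrμ : Integrable (llr μ (stdGaussian d)) μ) (hllrν : Integrable (llr ν (stdGaussian d)) ν)
    {f g : EuclideanSpace ℝ (Fin d) → ℝ} (hfm : Measurable f) (hgm : Measurable g)
    (hfg : ∀ x y, f x + g y ≤ -⟪x, y⟫) {K : ℝ} (hK : ∀ x, ‖x‖ ≤ 2 → K ≤ f x)
    (hfi : Integrable f μ) (hgi : Integrable g ν) :
    ∫ x, f x ∂μ + ∫ y, g y ∂ν + (∫ x, ‖x‖ ^ 2 ∂μ) / 2 + (∫ y, ‖y‖ ^ 2 ∂ν) / 2 ≤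
      ∫ x, llr μ (stdGaussian d) x ∂μ + ∫ x, llr ν (stdGaussian d) x ∂ν := by
  have hdf := exists_le_sub_mul_norm_of_add_le_neg_inner hd hfg
  have hdg := exists_le_sub_mul_norm_of_add_le_neg_inner (f := g) (g := f) hd fun x y => by
    rw [add_comm, real_inner_comm]; exact hfg y x
  obtain ⟨a, ha⟩ := exists_integral_exp_add_inner_smul_eq_zero hfm hdf hK
  have hf := integrable_exp_of_decay (f := fun x => f x + ⟪a, x⟫) (by fun_prop)
    (decay_add_inner hdf a)
  have hg := integrable_exp_of_decay hgm hdg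
  have hsant := hS (fun x => f x + ⟪a, x⟫) (fun y => g (y + a)) (by fun_prop) (by fun_prop)
    (fun x y => by
      have := hfg x (y + a)
      rw [inner_add_right, real_inner_comm a x] at this
      linarith) hf ha
  rw [integral_add_right_eq_self (fun y => Real.exp (g y)) a] at hsant
  have hid : Integrable (fun x : EuclideanSpace ℝ (Fin d) => x) μ := by
    refine (hμ.add (integrable_const 1)).mono' (by fun_prop)
      (Filter.Eventually.of_forall fun x => ?_)
    simp only [Pi.add_apply]
    nlinarith [sq_nonneg (‖x‖ - 1)]
  have hia : Integrable (fun x => ⟪a, x⟫) μ := hid.const_inner a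
  have h1 := integral_add_half_integral_sq_norm_le hacμ hllrμ hμ (hfi.add hia) hf
  have h2 := integral_add_half_integral_sq_norm_le hacν hllrν hν hgi hg
  simp only [Pi.add_apply] at h1
  rw [integral_add hfi hia, integral_inner hid, hcent, inner_zero_right] at h1
  have hZf := integral_exp_pos hf
  have hZg := integral_exp_pos hg
  rw [← Real.log_le_log_iff (by positivity) (by positivity), Real.log_mul hZf.ne' hZg.ne',
    Real.log_pow] at hsant
  linarith

end Entropy

section Coupling

variable {α ι κ : Type*} [MeasurableSpace α] [Fintype ι] [MeasurableSpace ι]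
  [MeasurableSingletonClass ι] [Fintype κ]

theorem integrable_comp_of_fintype {μ : Measure α} [IsFiniteMeasure μ] {s : α → ι}
    (hs : Measurable s) (a : ι → ℝ) : Integrable (fun x => a (s x)) μ :=
  (Integrable.of_finite (μ := μ.map s) (f := a)).comp_measurable hs

theorem integral_comp_of_fintype {μ : Measure α} [IsFiniteMeasure μ] {s : α → ι}
    (hs : Measurable s) (a : ι → ℝ) :
    ∫ x, a (s x) ∂μ = ∑ i, μ.real (s ⁻¹' {i}) * a i := by
  rw [← integral_map hs.aemeasurable (by fun_prop), integral_fintype Integrable.of_finite]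
  exact Finset.sum_congr rfl fun i _ => by
    rw [map_measureReal_apply hs (measurableSet_singleton i), smul_eq_mul]

theorem measureReal_preimage_singleton_mem_stdSimplex (μ : Measure α) [IsProbabilityMeasure μ]
    {s : α → ι} (hs : Measurable s) : (fun i => μ.real (s ⁻¹' {i})) ∈ stdSimplex ℝ ι := by
  refine ⟨fun i => measureReal_nonneg, ?_⟩
  have h := integral_comp_of_fintype (μ := μ) hs fun _ => 1
  simpa using h.symm

theorem sum_smul_cond_prod_map_fst {μ ν : Measure α} [IsProbabilityMeasure μ]
    [IsProbabilityMeasure ν] {s : α → ι} {t : α → κ} (hs : Measurable s)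
    {m : ι → κ → ℝ} (hm : ∀ i j, 0 ≤ m i j)
    (hrow : ∀ i, ∑ j, m i j = μ.real (s ⁻¹' {i})) (hcol : ∀ j, ∑ i, m i j = ν.real (t ⁻¹' {j})) :
    ∑ i, ∑ j, ENNReal.ofReal (m i j) • ((ProbabilityTheory.cond μ (s ⁻¹' {i})).prod
      (ProbabilityTheory.cond ν (t ⁻¹' {j}))).map Prod.fst = μ := by
  conv_rhs => rw [← ProbabilityTheory.sum_meas_smul_cond_fiber hs μ]
  refine Finset.sum_congr rfl fun i _ => ?_
  have hterm : ∀ j, ENNReal.ofReal (m i j) • ((ProbabilityTheory.cond μ (s ⁻¹' {i})).prod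
      (ProbabilityTheory.cond ν (t ⁻¹' {j}))).map Prod.fst
      = ENNReal.ofReal (m i j) • ProbabilityTheory.cond μ (s ⁻¹' {i}) := by
    intro j
    by_cases hν : ν (t ⁻¹' {j}) = 0
    · have h0 : m i j = 0 := by
        refine le_antisymm ?_ (hm i j)
        calc m i j ≤ ∑ i, m i j :=
              Finset.single_le_sum (f := fun i => m i j) (fun i _ => hm i j) (Finset.mem_univ i)
          _ = 0 := by rw [hcol, measureReal_def, hν, ENNReal.toReal_zero]
      simp [h0]
    · have := ProbabilityTheory.cond_isProbabilityMeasure hν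
      rw [Measure.map_fst_prod, measure_univ, one_smul]
  rw [Finset.sum_congr rfl fun j _ => hterm j, ← Finset.sum_smul,
    ← ENNReal.ofReal_sum_of_nonneg fun j _ => hm i j, hrow, ofReal_measureReal]

/-- A coupling of the laws of two discretizations lifts to a coupling of the measures. -/
theorem exists_isCoupling_integral_eq [MeasurableSpace κ] [MeasurableSingletonClass κ]
    {μ ν : Measure α} [IsProbabilityMeasure μ] [IsProbabilityMeasure ν] {s : α → ι} {t : α → κ} (hs : Measurable s) (ht : Measurable t)
    {m : ι → κ → ℝ} (hm : ∀ i j, 0 ≤ m i j)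
    (hrow : ∀ i, ∑ j, m i j = μ.real (s ⁻¹' {i})) (hcol : ∀ j, ∑ i, m i j = ν.real (t ⁻¹' {j})) :
    ∃ π : Measure (α × α), IsProbabilityMeasure π ∧ IsCoupling π μ ν ∧
      ∀ c : ι → κ → ℝ, ∫ z, c (s z.1) (t z.2) ∂π = ∑ i, ∑ j, m i j * c i j := by
  let P : ι → κ → Measure (α × α) := fun i j =>
    (ProbabilityTheory.cond μ (s ⁻¹' {i})).prod (ProbabilityTheory.cond ν (t ⁻¹' {j}))
  let π : Measure (α × α) := ∑ i, ∑ j, ENNReal.ofReal (m i j) • P i j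
  have hmap : ∀ {φ : α × α → α}, Measurable φ →
      π.map φ = ∑ i, ∑ j, ENNReal.ofReal (m i j) • (P i j).map φ := by
    intro φ hφ
    simp only [π, ← Measure.mapₗ_apply_of_measurable hφ, map_sum, map_smul]
  have hfst : π.map Prod.fst = μ := by
    rw [hmap measurable_fst]
    exact sum_smul_cond_prod_map_fst hs hm hrow hcol
  have hsnd : π.map Prod.snd = ν := by
    rw [hmap measurable_snd, Finset.sum_comm]
    rw [← sum_smul_cond_prod_map_fst (μ := ν) (ν := μ) (m := fun j i => m i j) ht
      (fun j i => hm i j) hcol hrow]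
    refine Finset.sum_congr rfl fun j _ => Finset.sum_congr rfl fun i _ => ?_
    simp only [P, Measure.map_fst_prod, Measure.map_snd_prod]
  have hπ : IsProbabilityMeasure π := by
    refine ⟨?_⟩
    rw [← Set.preimage_univ (f := Prod.fst), ← Measure.map_apply measurable_fst .univ, hfst,
      measure_univ]
  refine ⟨π, hπ, ⟨hfst, hsnd⟩, fun c => ?_⟩
  have hmeas : Measurable fun z : α × α => (s z.1, t z.2) := by fun_prop
  have hint : ∀ i j, Integrable (fun z : α × α => c (s z.1) (t z.2))
      (ENNReal.ofReal (m i j) • P i j) := fun i j =>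
    (integrable_comp_of_fintype (μ := P i j) hmeas fun k : ι × κ => c k.1 k.2).smul_measure
      ENNReal.ofReal_ne_top
  rw [integral_finsetSum_measure fun i _ => integrable_finsetSum_measure.2 fun j _ => hint i j]
  refine Finset.sum_congr rfl fun i _ => ?_
  rw [integral_finsetSum_measure fun j _ => hint i j]
  refine Finset.sum_congr rfl fun j _ => ?_
  rw [integral_smul_measure, ENNReal.toReal_ofReal (hm i j), smul_eq_mul]
  rcases (hm i j).eq_or_lt with h0 | h0
  · simp [← h0]
  · have hμ : μ (s ⁻¹' {i}) ≠ 0 := by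
      have h : 0 < μ.real (s ⁻¹' {i}) := h0.trans_le <| hrow i ▸
        Finset.single_le_sum (f := fun j => m i j) (fun j _ => hm i j) (Finset.mem_univ j)
      exact fun h' => by simp [measureReal_def, h'] at h
    have hν : ν (t ⁻¹' {j}) ≠ 0 := by
      have h : 0 < ν.real (t ⁻¹' {j}) := h0.trans_le <| hcol j ▸
        Finset.single_le_sum (f := fun i => m i j) (fun i _ => hm i j) (Finset.mem_univ i)
      exact fun h' => by simp [measureReal_def, h'] at h
    have := ProbabilityTheory.cond_isProbabilityMeasure hμ
    have := ProbabilityTheory.cond_isProbabilityMeasure hν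
    have h1 : ∀ᵐ z ∂(P i j), s z.1 = i := Measure.quasiMeasurePreserving_fst.ae
      (ProbabilityTheory.ae_cond_mem (hs (measurableSet_singleton i)))
    have h2 : ∀ᵐ z ∂(P i j), t z.2 = j := Measure.quasiMeasurePreserving_snd.ae
      (ProbabilityTheory.ae_cond_mem (ht (measurableSet_singleton j)))
    have h3 : (fun z : α × α => c (s z.1) (t z.2)) =ᵐ[P i j] fun _ => c i j := by
      filter_upwards [h1, h2] with z hz1 hz2
      rw [hz1, hz2]
    rw [integral_congr_ae h3, integral_const]
    simp [P]

end Coupling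

theorem exists_simpleFunc_integral_sq_norm_sub_le {E : Type*} [NormedAddCommGroup E]
    [MeasurableSpace E] [BorelSpace E] [SecondCountableTopology E] {μ : Measure E}
    (hμ : Integrable (fun x => ‖x‖ ^ 2) μ) {η : ℝ} (hη : 0 < η) :
    ∃ s : SimpleFunc E E, Integrable (fun x => ‖x - s x‖ ^ 2) μ ∧
      ∫ x, ‖x - s x‖ ^ 2 ∂μ ≤ η ^ 2 := by
  have hid : MemLp (fun x : E => x) 2 μ :=
    (memLp_two_iff_integrable_sq_norm (by fun_prop)).2 hμ
  obtain ⟨s, hs, hs2⟩ := hid.exists_simpleFunc_eLpNorm_sub_lt (by norm_num)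
    (ENNReal.ofReal_pos.2 hη).ne'
  have hsub := hid.sub hs2
  refine ⟨s, (memLp_two_iff_integrable_sq_norm hsub.1).1 hsub, ?_⟩
  rw [hsub.eLpNorm_eq_integral_rpow_norm (by norm_num) (by norm_num),
    ENNReal.ofReal_lt_ofReal_iff hη] at hs
  simp only [ENNReal.toReal_ofNat, Real.rpow_ofNat, Pi.sub_apply] at hs
  rw [← one_div, ← Real.sqrt_eq_rpow, Real.sqrt_lt' hη] at hs
  exact hs.le

/-- The error made when both arguments of an inner product are perturbed. -/
theorem two_mul_abs_inner_sub_inner_le {E : Type*} [NormedAddCommGroup E] [InnerProductSpace ℝ E]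
    {η : ℝ} (hη : 0 < η) (x y z w : E) :
    2 * |⟪x, y⟫ - ⟪z, w⟫| ≤ ((1 / η + 2 * η) * ‖x - z‖ ^ 2 + 2 * η * ‖x‖ ^ 2) +
      ((1 / η + 2 * η) * ‖y - w‖ ^ 2 + 2 * η * ‖y‖ ^ 2) := by
  have hyoung : ∀ u v : ℝ, 2 * (u * v) ≤ 1 / η * u ^ 2 + η * v ^ 2 := by
    intro u v
    have h : 1 / η * u ^ 2 + η * v ^ 2 - 2 * (u * v) = 1 / η * (u - η * v) ^ 2 := by
      field_simp
      ring
    have : 0 ≤ 1 / η * (u - η * v) ^ 2 := by positivity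
    linarith
  have e : ⟪x, y⟫ - ⟪z, w⟫ = ⟪x - z, y⟫ + ⟪z, y - w⟫ := by
    rw [inner_sub_left, inner_sub_right]; ring
  have hz : ‖z‖ ^ 2 ≤ 2 * ‖x‖ ^ 2 + 2 * ‖x - z‖ ^ 2 := by
    have := norm_sub_le x (x - z)
    rw [_root_.sub_sub_cancel] at this
    nlinarith [norm_nonneg z, sq_nonneg (‖x‖ - ‖x - z‖)]
  have h1 := abs_add_le ⟪x - z, y⟫ ⟪z, y - w⟫
  have h2 := abs_real_inner_le_norm (x - z) y
  have h3 := abs_real_inner_le_norm z (y - w)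
  have h4 := hyoung ‖x - z‖ ‖y‖
  have h5 := hyoung ‖y - w‖ ‖z‖
  have h6 := mul_le_mul_of_nonneg_left hz hη.le
  have h7 : 0 ≤ η * ‖y‖ ^ 2 := by positivity
  have h8 : 0 ≤ η * ‖y - w‖ ^ 2 := by positivity
  rw [e]
  linarith


section Discretization

variable {d : ℕ}

/-- The error made when `x` is replaced by `s x` in an inner product, for a parameter `η`. -/
noncomputable def discretizationError {E : Type*} [NormedAddCommGroup E] (η : ℝ) (s : E → E)
    (x : E) : ℝ :=
  (1 / η + 2 * η) * ‖x - s x‖ ^ 2 + 2 * η * ‖x‖ ^ 2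

theorem measurable_discretizationError {E : Type*} [NormedAddCommGroup E] [MeasurableSpace E]
    [BorelSpace E] [SecondCountableTopology E] (η : ℝ) {s : E → E} (hs : Measurable s) :
    Measurable (discretizationError η s) := by
  unfold discretizationError
  fun_prop

/-- Second moments allow for a discretization with a small mean error. -/
theorem exists_simpleFunc_integral_discretizationError_le {E : Type*} [NormedAddCommGroup E]
    [MeasurableSpace E] [BorelSpace E] [SecondCountableTopology E] {μ : Measure E}
    (hμ : Integrable (fun x => ‖x‖ ^ 2) μ) {η : ℝ} (hη : 0 < η) (hη1 : η ≤ 1) :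
    ∃ s : SimpleFunc E E, Integrable (discretizationError η s) μ ∧
      ∫ x, discretizationError η s x ∂μ ≤ η * (3 + 2 * ∫ x, ‖x‖ ^ 2 ∂μ) := by
  obtain ⟨s, hs, hs2⟩ := exists_simpleFunc_integral_sq_norm_sub_le hμ hη
  refine ⟨s, (hs.const_mul _).add (hμ.const_mul _), ?_⟩
  unfold discretizationError
  rw [integral_add (hs.const_mul _) (hμ.const_mul _), integral_const_mul, integral_const_mul]
  have h1 : (1 / η + 2 * η) * ∫ x, ‖x - s x‖ ^ 2 ∂μ ≤ (1 / η + 2 * η) * η ^ 2 :=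
    mul_le_mul_of_nonneg_left hs2 (by positivity)
  have h2 : (1 / η + 2 * η) * η ^ 2 = η + 2 * η * η ^ 2 := by field_simp
  have h3 : η ^ 2 ≤ 1 := pow_le_one₀ hη.le hη1
  nlinarith

/-- The potentials obtained from a discretization are bounded below on bounded sets. -/
theorem exists_le_sub_discretizationError {E : Type*} [NormedAddCommGroup E]
    {ι : Type*} [Fintype ι] {η : ℝ} (hη : 0 < η) (s : E → ι) (p : ι → E) (a : ι → ℝ) :
    ∃ K, ∀ x, ‖x‖ ≤ 2 → K ≤ a (s x) - discretizationError η (fun x => p (s x)) x / 2 := by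
  refine ⟨-∑ i, |a i| - ((1 / η + 2 * η) * (2 + ∑ i, ‖p i‖) ^ 2 + 2 * η * 2 ^ 2) / 2,
    fun x hx => ?_⟩
  have ha : |a (s x)| ≤ ∑ i, |a i| :=
    Finset.single_le_sum (f := fun i => |a i|) (fun i _ => abs_nonneg _) (Finset.mem_univ _)
  have hp : ‖p (s x)‖ ≤ ∑ i, ‖p i‖ :=
    Finset.single_le_sum (f := fun i => ‖p i‖) (fun i _ => norm_nonneg _) (Finset.mem_univ _)
  have hsub : ‖x - p (s x)‖ ≤ 2 + ∑ i, ‖p i‖ := (norm_sub_le _ _).trans (by linarith)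
  have h1 : (1 / η + 2 * η) * ‖x - p (s x)‖ ^ 2 + 2 * η * ‖x‖ ^ 2
      ≤ (1 / η + 2 * η) * (2 + ∑ i, ‖p i‖) ^ 2 + 2 * η * 2 ^ 2 := by gcongr
  unfold discretizationError
  linarith [neg_abs_le (a (s x))]

/-- The transport cost of a coupling exceeds the discretized cost by at most the mean error. -/
theorem W2sq_le_ofReal_of_isCoupling {μ ν : Measure (EuclideanSpace ℝ (Fin d))}
    (hμ : Integrable (fun x => ‖x‖ ^ 2) μ) (hν : Integrable (fun x => ‖x‖ ^ 2) ν)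
    {R S : EuclideanSpace ℝ (Fin d) → ℝ} (hR : Integrable R μ) (hS : Integrable S ν)
    {π : Measure (EuclideanSpace ℝ (Fin d) × EuclideanSpace ℝ (Fin d))} (hπ : IsCoupling π μ ν)
    {k : EuclideanSpace ℝ (Fin d) × EuclideanSpace ℝ (Fin d) → ℝ} (hk : Integrable k π)
    (hle : ∀ z, -(2 * ⟪z.1, z.2⟫) ≤ 2 * k z + R z.1 + S z.2) :
    W2sq μ ν ≤ ENNReal.ofReal (∫ x, ‖x‖ ^ 2 ∂μ + ∫ y, ‖y‖ ^ 2 ∂ν + ∫ x, R x ∂μ +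
      ∫ y, S y ∂ν + 2 * ∫ z, k z ∂π) := by
  refine (iInf₂_le π hπ).trans ?_
  obtain ⟨rfl, rfl⟩ := hπ
  have hF := hμ.add hR
  have hG := hν.add hS
  have hF' : Integrable (fun z : EuclideanSpace ℝ (Fin d) × EuclideanSpace ℝ (Fin d) =>
      ‖z.1‖ ^ 2 + R z.1) π := hF.comp_measurable measurable_fst
  have hG' : Integrable (fun z : EuclideanSpace ℝ (Fin d) × EuclideanSpace ℝ (Fin d) =>
      ‖z.2‖ ^ 2 + S z.2) π := hG.comp_measurable measurable_snd
  have e1 := integral_map measurable_fst.aemeasurable hF.aestronglyMeasurable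
  have e2 := integral_map measurable_snd.aemeasurable hG.aestronglyMeasurable
  simp only [Pi.add_apply] at e1 e2
  rw [integral_add hμ hR] at e1
  rw [integral_add hν hS] at e2
  have hpt : ∀ z : EuclideanSpace ℝ (Fin d) × EuclideanSpace ℝ (Fin d), ‖z.1 - z.2‖ ^ 2 ≤
      (‖z.1‖ ^ 2 + R z.1) + (‖z.2‖ ^ 2 + S z.2) + 2 * k z := fun z => by
    rw [norm_sub_sq_real]
    linarith [hle z]
  calc _ ≤ ∫⁻ z, ENNReal.ofReal
          ((‖z.1‖ ^ 2 + R z.1) + (‖z.2‖ ^ 2 + S z.2) + 2 * k z) ∂π := by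
        refine lintegral_mono fun z => ?_
        rw [← enorm_eq_nnnorm, ← ofReal_norm, ← ENNReal.ofReal_pow (norm_nonneg _)]
        exact ENNReal.ofReal_le_ofReal (hpt z)
    _ = ENNReal.ofReal
          (∫ z, (‖z.1‖ ^ 2 + R z.1) + (‖z.2‖ ^ 2 + S z.2) + 2 * k z ∂π) :=
        (ofReal_integral_eq_lintegral_ofReal ((hF'.fun_add hG').fun_add (hk.const_mul 2))
          (Filter.Eventually.of_forall fun z => (sq_nonneg _).trans (hpt z))).symm
    _ ≤ _ := by
        rw [integral_add (hF'.fun_add hG') (hk.const_mul 2), integral_add hF' hG', ← e1, ← e2,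
          integral_const_mul]
        refine ENNReal.ofReal_le_ofReal (le_of_eq ?_)
        ring

theorem W2sq_le_add_error_of_functional_santalo (hd : 1 ≤ d)
    (hS : ∀ f g : EuclideanSpace ℝ (Fin d) → ℝ, Measurable f → Measurable g →
        (∀ x y, f x + g y ≤ -⟪x, y⟫) →
        Integrable (fun x => Real.exp (f x)) →
        (∫ x, Real.exp (f x) • x) = 0 →
        (∫ x, Real.exp (f x)) * (∫ y, Real.exp (g y)) ≤ (2 * Real.pi) ^ d)
    {μ ν : Measure (EuclideanSpace ℝ (Fin d))}
    [IsProbabilityMeasure μ] [IsProbabilityMeasure ν]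
    (hμ : Integrable (fun x => ‖x‖ ^ 2) μ) (hν : Integrable (fun x => ‖x‖ ^ 2) ν)
    (hcent : ∫ x, x ∂μ = 0) (hacμ : μ ≪ stdGaussian d) (hacν : ν ≪ stdGaussian d)
    (hllrμ : Integrable (llr μ (stdGaussian d)) μ) (hllrν : Integrable (llr ν (stdGaussian d)) ν)
    {η : ℝ} (hη : 0 < η) (hη1 : η ≤ 1) :
    W2sq μ ν ≤ ENNReal.ofReal (2 * ∫ x, llr μ (stdGaussian d) x ∂μ +
      2 * ∫ x, llr ν (stdGaussian d) x ∂ν +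
      2 * (η * (6 + 2 * ∫ x, ‖x‖ ^ 2 ∂μ + 2 * ∫ y, ‖y‖ ^ 2 ∂ν))) := by
  obtain ⟨s, hRi, hR⟩ := exists_simpleFunc_integral_discretizationError_le hμ hη hη1
  obtain ⟨t, hSi, hSle⟩ := exists_simpleFunc_integral_discretizationError_le hν hη hη1
  let s' : EuclideanSpace ℝ (Fin d) → s.range := fun x => ⟨s x, s.mem_range_self x⟩
  let t' : EuclideanSpace ℝ (Fin d) → t.range := fun y => ⟨t y, t.mem_range_self y⟩
  have hs' : Measurable s' := s.measurable.subtype_mk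
  have ht' : Measurable t' := t.measurable.subtype_mk
  have herr : ∀ x y, 2 * |⟪x, y⟫ - ⟪s x, t y⟫| ≤
      discretizationError η s x + discretizationError η t y := fun x y =>
    two_mul_abs_inner_sub_inner_le hη x y (s x) (t y)
  let c : s.range → t.range → ℝ := fun i j => -⟪(i : EuclideanSpace ℝ (Fin d)), j⟫
  rcases exists_coupling_or_exists_potentials
      (measureReal_preimage_singleton_mem_stdSimplex μ hs')
      (measureReal_preimage_singleton_mem_stdSimplex ν ht') c
      (∫ x, llr μ (stdGaussian d) x ∂μ + ∫ x, llr ν (stdGaussian d) x ∂ν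
        - (∫ x, ‖x‖ ^ 2 ∂μ) / 2 - (∫ y, ‖y‖ ^ 2 ∂ν) / 2
        + (∫ x, discretizationError η s x ∂μ + ∫ y, discretizationError η t y ∂ν) / 2) with
    ⟨m, hm, hrow, hcol, hcost⟩ | ⟨a, b, hab, hdual⟩
  · obtain ⟨π, hπ, hcoup, hint⟩ := exists_isCoupling_integral_eq hs' ht' hm hrow hcol
    have hk : Integrable (fun z : EuclideanSpace ℝ (Fin d) × EuclideanSpace ℝ (Fin d) =>
        c (s' z.1) (t' z.2)) π :=
      integrable_comp_of_fintype ((hs'.comp measurable_fst).prodMk (ht'.comp measurable_snd))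
        (Function.uncurry c)
    refine (W2sq_le_ofReal_of_isCoupling hμ hν hRi hSi hcoup hk fun z => ?_).trans
      (ENNReal.ofReal_le_ofReal ?_)
    · have h := neg_abs_le (⟪z.1, z.2⟫ - ⟪s z.1, t z.2⟫)
      simp only [c, s', t']
      linarith [herr z.1 z.2]
    · rw [hint c]
      linarith
  · have hfi := (integrable_comp_of_fintype (μ := μ) hs' a).sub (hRi.div_const 2)
    have hgi := (integrable_comp_of_fintype (μ := ν) ht' b).sub (hSi.div_const 2)
    have hmR := measurable_discretizationError η s.measurable
    have hmS := measurable_discretizationError η t.measurable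
    obtain ⟨K, hK⟩ := exists_le_sub_discretizationError hη s' Subtype.val a
    have h := integral_add_integral_le_of_functional_santalo hd hS hμ hν hcent hacμ hacν
      hllrμ hllrν
      (f := fun x => a (s' x) - discretizationError η s x / 2)
      (g := fun y => b (t' y) - discretizationError η t y / 2)
      (((measurable_of_finite a).comp hs').sub (hmR.div_const 2))
      (((measurable_of_finite b).comp ht').sub (hmS.div_const 2))
      (fun x y => by
        have h1 := hab (s' x) (t' y)
        simp only [c, s', t'] at h1 ⊢
        linarith [herr x y, le_abs_self (⟪x, y⟫ - ⟪s x, t y⟫)])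
      hK hfi hgi
    rw [integral_sub (integrable_comp_of_fintype hs' a) (hRi.div_const 2),
      integral_sub (integrable_comp_of_fintype ht' b) (hSi.div_const 2), integral_div,
      integral_div, integral_comp_of_fintype hs', integral_comp_of_fintype ht'] at h
    linarith

theorem symmetrized_talagrand_of_functional_santalo (hd : 1 ≤ d)
    (hS : ∀ f g : EuclideanSpace ℝ (Fin d) → ℝ, Measurable f → Measurable g →
        (∀ x y, f x + g y ≤ -⟪x, y⟫) →
        Integrable (fun x => Real.exp (f x)) →
        (∫ x, Real.exp (f x) • x) = 0 →
        (∫ x, Real.exp (f x)) * (∫ y, Real.exp (g y)) ≤ (2 * Real.pi) ^ d)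
    {μ ν : Measure (EuclideanSpace ℝ (Fin d))}
    [IsProbabilityMeasure μ] [IsProbabilityMeasure ν]
    (hμ : Integrable (fun x => ‖x‖ ^ 2) μ) (hν : Integrable (fun x => ‖x‖ ^ 2) ν)
    (hcent : ∫ x, x ∂μ = 0) :
    W2sq μ ν ≤ 2 * relEnt μ (stdGaussian d) + 2 * relEnt ν (stdGaussian d) := by
  unfold relEnt
  split_ifs with hμγ hνγ
  · obtain ⟨hacμ, hllrμ⟩ := hμγ
    obtain ⟨hacν, hllrν⟩ := hνγ
    have hEμ := InformationTheory.integral_llr_add_sub_measure_univ_nonneg hacμ hllrμ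
    have hEν := InformationTheory.integral_llr_add_sub_measure_univ_nonneg hacν hllrν
    rw [probReal_univ, probReal_univ, add_sub_cancel_right, llr_def] at hEμ hEν
    rw [two_mul_ofReal_add_two_mul_ofReal hEμ hEν]
    have hlim : Filter.Tendsto (fun η : ℝ => ENNReal.ofReal
        (2 * ∫ x, llr μ (stdGaussian d) x ∂μ + 2 * ∫ x, llr ν (stdGaussian d) x ∂ν +
          2 * (η * (6 + 2 * ∫ x, ‖x‖ ^ 2 ∂μ + 2 * ∫ y, ‖y‖ ^ 2 ∂ν))))
        (nhdsWithin 0 (Set.Ioi 0)) (nhds (ENNReal.ofReal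
          (2 * ∫ x, llr μ (stdGaussian d) x ∂μ + 2 * ∫ x, llr ν (stdGaussian d) x ∂ν))) := by
      refine (ENNReal.continuous_ofReal.comp (by fun_prop)).tendsto' 0 _ ?_ |>.mono_left
        nhdsWithin_le_nhds
      simp
    refine ge_of_tendsto hlim ?_
    filter_upwards [Ioc_mem_nhdsGT zero_lt_one] with η hη
    exact W2sq_le_add_error_of_functional_santalo hd hS hμ hν hcent hacμ hacν hllrμ hllrν
      hη.1 hη.2
  all_goals simp

end Discretization

/-- **Equivalence of the symmetrized Talagrand inequality and the functional Santaló
inequality** (in dimension `d`). -/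
theorem symmetrized_talagrand_iff_functional_santalo (d : ℕ) (hd : 1 ≤ d) :
    (∀ μ ν : Measure (EuclideanSpace ℝ (Fin d)),
        IsProbabilityMeasure μ → IsProbabilityMeasure ν →
        Integrable (fun x => ‖x‖ ^ 2) μ → Integrable (fun x => ‖x‖ ^ 2) ν →
        (∫ x, x ∂μ) = 0 →
        W2sq μ ν ≤ 2 * relEnt μ (stdGaussian d) + 2 * relEnt ν (stdGaussian d)) ↔
    (∀ f g : EuclideanSpace ℝ (Fin d) → ℝ, Measurable f → Measurable g →
        (∀ x y, f x + g y ≤ -⟪x, y⟫) →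
        Integrable (fun x => Real.exp (f x)) →
        (∫ x, Real.exp (f x) • x) = 0 →
        (∫ x, Real.exp (f x)) * (∫ y, Real.exp (g y)) ≤ (2 * Real.pi) ^ d) := by
  refine ⟨fun hT f g hfm hgm hfg _ hcent => ?_, fun hS μ ν _ _ hμ hν hcent => ?_⟩
  · exact functional_santalo_of_symmetrized_talagrand hd hT hfm hgm hfg hcent
  · exact symmetrized_talagrand_of_functional_santalo hd hS hμ hν hcent
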